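/- Let X be a nonempty compact metric space, Λ a compact metric space, w : Λ × X → X a weakly hyperbolic IFS, and p a Borel probability measure on Λ. Then there exists a unique Borel probability measure ν on X with T_p(ν) = ν, and T_pⁿ(μ) → ν in the weak* topology for every Borel probability measure μ on X. Moreover, if p(U) > 0 for every nonempty open set U ⊆ Λ, then the support of ν equals the global attractor K of w. -/

import Mathlib

open Metric Set Filter Topology MeasureTheory

/-- `seqComp w σ n = w_{σ₁} ∘ ⋯ ∘ w_{σₙ}` (with `σ i` denoting `σ_{i+1}`). -/
def seqComp {Λ X : Type*} (w : Λ → X → X) (σ : ℕ → Λ) : ℕ → X → X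
  | 0 => id
  | n + 1 => seqComp w σ n ∘ w (σ n)

/-- The Hutchinson–Barnsley operator on sets: `F(A) = w(Λ × A)`. -/
def HBset {Λ X : Type*} (w : Λ → X → X) (A : Set X) : Set X :=
  (fun p : Λ × X => w p.1 p.2) '' (Set.univ ×ˢ A)

/-- The (topological) support of a measure: the set of points all of whose
neighbourhoods have positive measure. -/
def measSupport {X : Type*} [TopologicalSpace X] [MeasurableSpace X]
    (μ : MeasureTheory.Measure X) : Set X :=
  {x : X | ∀ U : Set X, IsOpen U → x ∈ U → 0 < μ U}

/-
Two random orbits driven by the same letters get uniformly close, because weak hyperbolicity is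
automatically uniform over the compact space of letter sequences. Hence the measures `T^[n] μ` and
`T^[n] μ'` become weakly indistinguishable, uniformly in `μ` and `μ'`. By compactness some measure
lies in `⋂ n, range T^[n]`, and it is then the limit of every orbit of `T`. Since the support of
`T μ` is `w(supp p × supp μ)`, the support of the invariant measure is a closed fixed point of the
Hutchinson–Barnsley operator when `supp p = Λ`, and `K` is the only one.
-/

open Function
open scoped BoundedContinuousFunction

theorem exists_unique_isFixedPt_forall_tendsto_iterate {Y : Type*} [TopologicalSpace Y]
    [CompactSpace Y] [T2Space Y] [Nonempty Y] {T : Y → Y} (hT : Continuous T)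
    (hasymp : ∀ (u v : ℕ → Y) (y : Y), Tendsto (fun n => T^[n] (u n)) atTop (𝓝 y) →
      Tendsto (fun n => T^[n] (v n)) atTop (𝓝 y)) :
    ∃ y, IsFixedPt T y ∧ (∀ z, IsFixedPt T z → z = y) ∧
      ∀ x, Tendsto (fun n => T^[n] x) atTop (𝓝 y) := by
  have hcompact (n : ℕ) : IsCompact (range T^[n]) := isCompact_range (hT.iterate n)
  have hanti (n : ℕ) : range T^[n + 1] ⊆ range T^[n] := by
    rw [iterate_succ]
    exact range_comp_subset_range T T^[n]
  obtain ⟨y, hy⟩ : (⋂ n, range T^[n]).Nonempty :=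
    IsCompact.nonempty_iInter_of_sequence_nonempty_isCompact_isClosed _ hanti
      (fun _ => range_nonempty _) (hcompact 0) fun n => (hcompact n).isClosed
  choose u hu using mem_iInter.1 hy
  have hlim (x : Y) : Tendsto (fun n => T^[n] x) atTop (𝓝 y) :=
    hasymp u (fun _ => x) y <| by simpa only [hu] using tendsto_const_nhds
  refine ⟨y, isFixedPt_of_tendsto_iterate (hlim y) hT.continuousAt, fun z hz => ?_, hlim⟩
  have hconst := hlim z
  simp only [iterate_fixed hz] at hconst
  exact tendsto_nhds_unique tendsto_const_nhds hconst

theorem eq_of_isFixedPt_of_tendsto_hausdorffDist {X : Type*} [PseudoMetricSpace X]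
    {F : Set X → Set X} {S K : Set X} (hF : IsFixedPt F S) (hS : IsClosed S) (hK : IsClosed K)
    (hfin : hausdorffEDist S K ≠ ⊤)
    (hlim : Tendsto (fun n => hausdorffDist (F^[n] S) K) atTop (𝓝 0)) : S = K := by
  have hzero : hausdorffDist S K = 0 := by
    simp only [iterate_fixed hF] at hlim
    exact tendsto_nhds_unique tendsto_const_nhds hlim
  exact (hS.hausdorffDist_zero_iff_eq hK hfin).1 hzero

theorem dist_integral_le_of_forall_dist_le {X Y E : Type*} [MeasurableSpace X] [MeasurableSpace Y]
    [NormedAddCommGroup E] [NormedSpace ℝ E] {μ : Measure X} [IsProbabilityMeasure μ]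
    {ν : Measure Y} [IsProbabilityMeasure ν] {f : X → E} {g : Y → E} (hf : Integrable f μ)
    (hg : Integrable g ν) {C : ℝ} (hC : ∀ x y, dist (f x) (g y) ≤ C) :
    dist (∫ x, f x ∂μ) (∫ y, g y ∂ν) ≤ C := by
  have hprod : ∫ x, f x ∂μ - ∫ y, g y ∂ν = ∫ z, (f z.1 - g z.2) ∂μ.prod ν := by
    rw [integral_sub (hf.comp_fst ν) (hg.comp_snd μ), integral_fun_fst, integral_fun_snd]
    simp only [probReal_univ, one_smul]
  rw [dist_eq_norm, hprod]
  simpa only [probReal_univ, mul_one] using norm_integral_le_of_norm_le_const (μ := μ.prod ν)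
    (Eventually.of_forall fun z => (dist_eq_norm (f z.1) (g z.2)).symm.trans_le (hC _ _))

section Support

variable {X Y : Type*} [TopologicalSpace X] [MeasurableSpace X] [TopologicalSpace Y]
  [MeasurableSpace Y]

theorem measSupport_eq_support (μ : Measure X) : measSupport μ = μ.support := by
  rw [Measure.support_eq_forall_isOpen]
  exact ext fun x => forall_congr' fun U => forall_comm

theorem measureSupport_prod (μ : Measure X) (ν : Measure Y) [SFinite ν] :
    (μ.prod ν).support = μ.support ×ˢ ν.support := by
  ext ⟨x, y⟩
  simp only [mem_prod, ((𝓝 x).basis_sets.prod_nhds (𝓝 y).basis_sets).mem_measureSupport,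
    Measure.mem_support_iff_forall, Measure.prod_prod, ENNReal.mul_pos_iff, Prod.forall, id_eq]
  exact ⟨fun h => ⟨fun U hU => (h U univ ⟨hU, univ_mem⟩).1,
    fun V hV => (h univ V ⟨univ_mem, hV⟩).2⟩, fun h U V hUV => ⟨h.1 U hUV.1, h.2 V hUV.2⟩⟩

theorem measureSupport_prod_mem_ae {μ : Measure X} {ν : Measure Y} [SFinite μ] [SFinite ν]
    (hμ : μ.support ∈ ae μ) (hν : ν.support ∈ ae ν) : (μ.prod ν).support ∈ ae (μ.prod ν) := by
  rw [measureSupport_prod]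
  exact inter_mem (Measure.quasiMeasurePreserving_fst.tendsto_ae hμ)
    (Measure.quasiMeasurePreserving_snd.tendsto_ae hν)

theorem measureSupport_map [OpensMeasurableSpace X] [BorelSpace Y] {f : X → Y} (hf : Continuous f)
    {μ : Measure X} (hμ : μ.support ∈ ae μ) : (μ.map f).support = closure (f '' μ.support) := by
  apply Subset.antisymm
  · apply Measure.support_subset_of_isClosed isClosed_closure
    rw [mem_ae_map_iff hf.aemeasurable isClosed_closure.measurableSet]
    exact mem_of_superset hμ fun x hx => subset_closure (mem_image_of_mem f hx)
  · refine closure_minimal ?_ Measure.isClosed_support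
    rintro _ ⟨x, hx, rfl⟩
    rw [Measure.mem_support_iff_forall] at hx ⊢
    intro U hU
    exact (hx _ (hf.continuousAt hU)).trans_le (Measure.le_map_apply hf.aemeasurable U)

end Support

section Words

variable {Λ X : Type*} {w : Λ → X → X}

theorem seqComp_cons (w : Λ → X → X) (l : Λ) (σ : ℕ → Λ) (n : ℕ) :
    seqComp w (fun k => k.casesOn l σ) (n + 1) = w l ∘ seqComp w σ n := by
  induction n with
  | zero => rfl
  | succ n ih => rw [seqComp, ih, seqComp, comp_assoc]

theorem continuous_uncurry_seqComp [TopologicalSpace Λ] [TopologicalSpace X]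
    (hw : Continuous (uncurry w)) (n : ℕ) :
    Continuous fun q : (ℕ → Λ) × X => seqComp w q.1 n q.2 := by
  induction n with
  | zero => exact continuous_snd
  | succ n ih =>
    exact ih.comp (continuous_fst.prodMk
      (hw.comp (((continuous_apply n).comp continuous_fst).prodMk continuous_snd)))

theorem isOpen_setOf_forall_dist_seqComp_lt [TopologicalSpace Λ] [PseudoMetricSpace X]
    [CompactSpace X] (hw : Continuous (uncurry w)) (ε : ℝ) (n : ℕ) :
    IsOpen {σ : ℕ → Λ | ∀ x y, dist (seqComp w σ n x) (seqComp w σ n y) < ε} := by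
  have hdist : Continuous fun q : (ℕ → Λ) × X × X =>
      dist (seqComp w q.1 n q.2.1) (seqComp w q.1 n q.2.2) := by
    have hseq := continuous_uncurry_seqComp hw n
    exact (hseq.comp (continuous_fst.prodMk continuous_snd.fst)).dist
      (hseq.comp (continuous_fst.prodMk continuous_snd.snd))
  rw [isOpen_iff_mem_nhds]
  intro σ hσ
  have hnear : ∀ᶠ τ in 𝓝 σ, ∀ z ∈ (univ : Set (X × X)),
      dist (seqComp w τ n z.1) (seqComp w τ n z.2) < ε :=
    isCompact_univ.eventually_forall_of_forall_eventually fun z _ =>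
      hdist.continuousAt.eventually_lt_const (hσ z.1 z.2)
  exact hnear.mono fun τ hτ x y => hτ (x, y) (mem_univ _)

theorem eventually_forall_dist_seqComp_lt [TopologicalSpace Λ] [CompactSpace Λ]
    [PseudoMetricSpace X] [CompactSpace X] (hw : Continuous (uncurry w))
    (hyp : ∀ σ : ℕ → Λ, Tendsto (fun n => diam (range (seqComp w σ n))) atTop (𝓝 0))
    {ε : ℝ} (hε : 0 < ε) :
    ∀ᶠ n in atTop, ∀ σ x y, dist (seqComp w σ n x) (seqComp w σ n y) < ε := by
  let U (n : ℕ) : Set (ℕ → Λ) := {σ | ∀ x y, dist (seqComp w σ n x) (seqComp w σ n y) < ε}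
  have hmono : Monotone U := monotone_nat_of_le_succ fun n σ hσ x y => hσ (w (σ n) x) (w (σ n) y)
  have hcover : univ ⊆ ⋃ n, U n := by
    intro σ _
    obtain ⟨n, hn⟩ := ((hyp σ).eventually_lt_const hε).exists
    refine mem_iUnion.2 ⟨n, fun x y => (dist_le_diam_of_mem ?_ ?_ ?_).trans_lt hn⟩
    exacts [isBounded_of_compactSpace, mem_range_self x, mem_range_self y]
  obtain ⟨N, hN⟩ := isCompact_univ.elim_directed_cover U
    (isOpen_setOf_forall_dist_seqComp_lt hw ε) hcover hmono.directed_le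
  filter_upwards [eventually_ge_atTop N] with n hn σ
  exact hmono hn (hN (mem_univ σ))

end Words

section TransferOperator

variable {Λ X : Type*} [MeasurableSpace Λ] [MeasurableSpace X] {w : Λ → X → X}

/-- The transfer operator `T_p` of the family `w`, acting on probability measures: `T_p μ` is the
law of `w_λ(x)` for independent `λ ∼ p` and `x ∼ μ`. -/
noncomputable def transferOperator (p : ProbabilityMeasure Λ) (hw : Measurable (uncurry w))
    (μ : ProbabilityMeasure X) : ProbabilityMeasure X :=
  (p.prod μ).map hw.aemeasurable

theorem eq_transferOperator_of_forall_apply {p : ProbabilityMeasure Λ}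
    (hw : Measurable (uncurry w)) {μ ν : ProbabilityMeasure X}
    (h : ∀ B, MeasurableSet B → (ν : Measure X) B = ∫⁻ l, (μ : Measure X) (w l ⁻¹' B) ∂p) :
    ν = transferOperator p hw μ := by
  apply Subtype.ext
  refine Measure.ext fun B hB => (h B hB).trans ?_
  change _ = ((p : Measure Λ).prod (μ : Measure X)).map (uncurry w) B
  rw [Measure.map_apply hw hB, Measure.prod_apply (hw hB)]
  rfl

section Topological

variable [TopologicalSpace Λ] [OpensMeasurableSpace Λ]
  [TopologicalSpace X] [SecondCountableTopology X] [BorelSpace X]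

theorem integral_transferOperator (p : ProbabilityMeasure Λ) (hw : Continuous (uncurry w))
    (μ : ProbabilityMeasure X) (f : X →ᵇ ℝ) :
    ∫ x, f x ∂(transferOperator p hw.measurable μ : Measure X) =
      ∫ z, f (w z.1 z.2) ∂(p : Measure Λ).prod μ :=
  integral_map hw.aemeasurable f.continuous.aestronglyMeasurable

theorem continuous_transferOperator (p : ProbabilityMeasure Λ) (hw : Continuous (uncurry w)) :
    Continuous (transferOperator (X := X) p hw.measurable) := by
  rw [ProbabilityMeasure.continuous_iff_forall_continuous_integral]
  intro f
  let F : Λ × X →ᵇ ℝ := f.compContinuous ⟨uncurry w, hw⟩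
  have hcont : Continuous fun x => ∫ l, F (l, x) ∂p :=
    continuous_of_dominated
      (fun x => (F.continuous.comp (.prodMk_left x)).aestronglyMeasurable)
      (fun x => Eventually.of_forall fun l => F.norm_coe_le_norm (l, x))
      (integrable_const ‖F‖) (Eventually.of_forall fun l => F.continuous.comp (.prodMk_right l))
  have hbound (x : X) : ‖∫ l, F (l, x) ∂p‖ ≤ ‖F‖ := by
    simpa only [probReal_univ, mul_one] using norm_integral_le_of_norm_le_const (μ := p)
      (Eventually.of_forall fun l => F.norm_coe_le_norm (l, x))
  have hdual (μ : ProbabilityMeasure X) :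
      ∫ x, f x ∂(transferOperator p hw.measurable μ : Measure X) = ∫ x, ∫ l, F (l, x) ∂p ∂μ :=
    (integral_transferOperator p hw μ f).trans (integral_prod_symm F (F.integrable _))
  simp only [hdual]
  exact ProbabilityMeasure.continuous_integral_boundedContinuousFunction
    (.ofNormedAddCommGroup _ hcont ‖F‖ hbound)

theorem dist_integral_iterate_transferOperator_le (p : ProbabilityMeasure Λ)
    (hw : Continuous (uncurry w)) {f : X →ᵇ ℝ} {n : ℕ} {C : ℝ}
    (hC : ∀ σ x y, dist (f (seqComp w σ n x)) (f (seqComp w σ n y)) ≤ C)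
    (μ ν : ProbabilityMeasure X) :
    dist (∫ x, f x ∂((transferOperator p hw.measurable)^[n] μ : Measure X))
      (∫ x, f x ∂((transferOperator p hw.measurable)^[n] ν : Measure X)) ≤ C := by
  induction n generalizing f with
  | zero =>
    obtain ⟨l⟩ := p.nonempty
    exact dist_integral_le_of_forall_dist_le (f.integrable _) (f.integrable _) (hC fun _ => l)
  | succ n ih =>
    have hint (ρ : ProbabilityMeasure X) :
        Integrable (fun z => f (w z.1 z.2)) ((p : Measure Λ).prod (ρ : Measure X)) :=
      (f.compContinuous ⟨uncurry w, hw⟩).integrable _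
    have hletter (l : Λ) :
        dist (∫ x, f (w l x) ∂((transferOperator p hw.measurable)^[n] μ : Measure X))
          (∫ x, f (w l x) ∂((transferOperator p hw.measurable)^[n] ν : Measure X)) ≤ C :=
      ih (f := f.compContinuous ⟨w l, hw.comp (.prodMk_right l)⟩) fun σ x y => by
        have hcons := hC (fun k => k.casesOn l σ) x y
        rwa [seqComp_cons] at hcons
    rw [iterate_succ_apply', iterate_succ_apply', integral_transferOperator p hw,
      integral_transferOperator p hw, integral_prod _ (hint _), integral_prod _ (hint _),
      dist_eq_norm, ← integral_sub (hint _).integral_prod_left (hint _).integral_prod_left]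
    simpa only [probReal_univ, mul_one] using norm_integral_le_of_norm_le_const (μ := p)
      (Eventually.of_forall fun l => (dist_eq_norm _ _).symm.trans_le (hletter l))

theorem support_transferOperator {p : ProbabilityMeasure Λ} (hp : (p : Measure Λ).support = univ)
    (hw : Continuous (uncurry w)) (μ : ProbabilityMeasure X) :
    (transferOperator p hw.measurable μ : Measure X).support =
      closure (HBset w (μ : Measure X).support) := by
  have hconull : ((p : Measure Λ).prod (μ : Measure X)).support ∈
      ae ((p : Measure Λ).prod (μ : Measure X)) :=
    measureSupport_prod_mem_ae (hp ▸ univ_mem) Measure.support_mem_ae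
  refine (measureSupport_map hw hconull).trans ?_
  rw [measureSupport_prod, hp]
  rfl

theorem isFixedPt_HBset_support [CompactSpace Λ] [CompactSpace X] [T2Space X]
    {p : ProbabilityMeasure Λ} (hp : (p : Measure Λ).support = univ)
    (hw : Continuous (uncurry w)) {ν : ProbabilityMeasure X}
    (hν : IsFixedPt (transferOperator p hw.measurable) ν) :
    IsFixedPt (HBset w) (ν : Measure X).support := by
  have hclosed : IsClosed (HBset w (ν : Measure X).support) :=
    ((isCompact_univ.prod Measure.isClosed_support.isCompact).image hw).isClosed
  have hsupp := support_transferOperator hp hw ν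
  rwa [hν.eq, hclosed.closure_eq, eq_comm] at hsupp

end Topological

theorem tendsto_iterate_transferOperator_of_tendsto [TopologicalSpace Λ] [OpensMeasurableSpace Λ]
    [CompactSpace Λ] [PseudoMetricSpace X] [BorelSpace X] [CompactSpace X]
    (p : ProbabilityMeasure Λ) (hw : Continuous (uncurry w))
    (hyp : ∀ σ : ℕ → Λ, Tendsto (fun n => diam (range (seqComp w σ n))) atTop (𝓝 0))
    (u v : ℕ → ProbabilityMeasure X) (ν : ProbabilityMeasure X)
    (hu : Tendsto (fun n => (transferOperator p hw.measurable)^[n] (u n)) atTop (𝓝 ν)) :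
    Tendsto (fun n => (transferOperator p hw.measurable)^[n] (v n)) atTop (𝓝 ν) := by
  rw [ProbabilityMeasure.tendsto_iff_forall_integral_tendsto] at hu ⊢
  intro f
  refine (hu f).congr_dist (Metric.tendsto_nhds.2 fun ε hε => ?_)
  obtain ⟨δ, hδ, hf⟩ := Metric.uniformContinuous_iff.1
    (CompactSpace.uniformContinuous_of_continuous f.continuous) (ε / 2) (half_pos hε)
  filter_upwards [eventually_forall_dist_seqComp_lt hw hyp hδ] with n hn
  rw [Real.dist_0_eq_abs, abs_dist]
  exact (dist_integral_iterate_transferOperator_le p hw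
    (fun σ x y => (hf (hn σ x y)).le) (u n) (v n)).trans_lt (half_lt_self hε)

end TransferOperator

theorem stmt_9_general {Λ X : Type*} [TopologicalSpace Λ] [CompactSpace Λ]
    [MeasurableSpace Λ] [OpensMeasurableSpace Λ]
    [MetricSpace X] [CompactSpace X] [Nonempty X] [MeasurableSpace X] [BorelSpace X]
    (w : Λ → X → X) (hw : Continuous fun p : Λ × X => w p.1 p.2)
    (hyp : ∀ σ : ℕ → Λ,
      Tendsto (fun n => diam (Set.range (seqComp w σ n))) atTop (𝓝 0))
    (p : Measure Λ) [IsProbabilityMeasure p]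
    (T : ProbabilityMeasure X → ProbabilityMeasure X)
    (hT : ∀ (μ : ProbabilityMeasure X) (B : Set X), MeasurableSet B →
      (T μ : Measure X) B = ∫⁻ l, (μ : Measure X) ((fun x => w l x) ⁻¹' B) ∂p)
    (K : Set X) (hKne : K.Nonempty) (hKc : IsCompact K)
    (hKattr : ∀ B : Set X, B.Nonempty → IsCompact B →
      Tendsto (fun n => hausdorffDist ((HBset w)^[n] B) K) atTop (𝓝 0)) :
    ∃ ν : ProbabilityMeasure X, T ν = ν ∧ (∀ ν' : ProbabilityMeasure X, T ν' = ν' → ν' = ν) ∧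
      (∀ μ : ProbabilityMeasure X, Tendsto (fun n => T^[n] μ) atTop (𝓝 ν)) ∧
      ((∀ U : Set Λ, IsOpen U → U.Nonempty → 0 < p U) →
        measSupport (ν : Measure X) = K) := by
  let P : ProbabilityMeasure Λ := ⟨p, inferInstance⟩
  obtain rfl : T = transferOperator P hw.measurable :=
    funext fun μ => eq_transferOperator_of_forall_apply hw.measurable (hT μ)
  inhabit X
  obtain ⟨ν, hν, huniq, hlim⟩ := exists_unique_isFixedPt_forall_tendsto_iterate
    (continuous_transferOperator P hw) (tendsto_iterate_transferOperator_of_tendsto P hw hyp)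
  refine ⟨ν, hν, huniq, hlim, fun hp => ?_⟩
  have : (P : Measure Λ).IsOpenPosMeasure := ⟨fun U hU hne => (hp U hU hne).ne'⟩
  have hfixed := isFixedPt_HBset_support (p := P) Measure.support_eq_univ hw hν
  have hclosed : IsClosed (ν : Measure X).support := Measure.isClosed_support
  have hne : (ν : Measure X).support.Nonempty := Measure.nonempty_support (NeZero.ne _)
  have hfin : hausdorffEDist (ν : Measure X).support K ≠ ⊤ :=
    hausdorffEDist_ne_top_of_nonempty_of_bounded hne hKne isBounded_of_compactSpace
      isBounded_of_compactSpace
  rw [measSupport_eq_support]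
  exact eq_of_isFixedPt_of_tendsto_hausdorffDist hfixed hclosed hKc.isClosed hfin
    (hKattr _ hne hclosed.isCompact)

/-- A weakly hyperbolic IFS on a nonempty compact metric space has a unique
invariant probability measure `ν`, which attracts all probability measures under
the transfer operator; if `p` gives positive mass to every nonempty open set,
the support of `ν` is the global attractor `K`. -/
theorem stmt_9 {Λ X : Type*} [MetricSpace Λ] [CompactSpace Λ]
    [MeasurableSpace Λ] [BorelSpace Λ]
    [MetricSpace X] [CompactSpace X] [Nonempty X] [MeasurableSpace X] [BorelSpace X]
    (w : Λ → X → X) (hw : Continuous fun p : Λ × X => w p.1 p.2)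
    (hyp : ∀ σ : ℕ → Λ,
      Tendsto (fun n => diam (Set.range (seqComp w σ n))) atTop (𝓝 0))
    (p : Measure Λ) [IsProbabilityMeasure p]
    (T : ProbabilityMeasure X → ProbabilityMeasure X)
    (hT : ∀ (μ : ProbabilityMeasure X) (B : Set X), MeasurableSet B →
      (T μ : Measure X) B = ∫⁻ l, (μ : Measure X) ((fun x => w l x) ⁻¹' B) ∂p)
    (K : Set X) (hKne : K.Nonempty) (hKc : IsCompact K)
    (hKattr : ∀ B : Set X, B.Nonempty → IsCompact B →
      Tendsto (fun n => hausdorffDist ((HBset w)^[n] B) K) atTop (𝓝 0)) :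
    ∃ ν : ProbabilityMeasure X, T ν = ν ∧ (∀ ν' : ProbabilityMeasure X, T ν' = ν' → ν' = ν) ∧
      (∀ μ : ProbabilityMeasure X, Tendsto (fun n => T^[n] μ) atTop (𝓝 ν)) ∧
      ((∀ U : Set Λ, IsOpen U → U.Nonempty → 0 < p U) →
        measSupport (ν : Measure X) = K) :=
  stmt_9_general w hw hyp p T hT K hKne hKc hKattr
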